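/- Let a finite family of traces {(ξ_i, r_i)}_{i=1}^N over finite sets A, S, T be given, fix (a,s,t) ∈ A × S × T, and suppose the successful-trace row sum Σ_{a''} C^1_succ[a,s,t,a''] is positive, where C^1_succ counts only transitions from traces with r_i = 1. Let a* ∈ A be a successor such that no trace with r_i = 0 contains the transition (a,s,t,a*) (a* is observed only in successful traces). Then the normalized routing probability M^α[a,s,t,a*] = C^α[a,s,t,a*] / Σ_{a''} C^α[a,s,t,a''] is a non-increasing function of α on [0,1]. -/

import Mathlib

/-!
Traces over finite sets `A` (agents), `S` (statuses), `T` (task types).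
A trace is a pair `(ξ i, r i)` with outcome label `r i ∈ {0,1}` and `ξ i` a finite
list of transitions `(a, s, t, a') ∈ A × S × T × A`.
The weighted count tensor is
`C^α[a,s,t,a'] = Σ_i (r_i + α(1 - r_i)) · n_i(a,s,t,a')`.
When the row sum is positive, the normalized routing matrix row is
`M^α[a,s,t,a'] = C^α[a,s,t,a'] / Σ_{a''} C^α[a,s,t,a'']`.
-/

/-- The weighted count tensor `C^α[a,s,t,a']` of a finite family of traces. -/
noncomputable def countTensor {A S T : Type*} [DecidableEq A] [DecidableEq S] [DecidableEq T]
    {N : ℕ} (ξ : Fin N → List (A × S × T × A)) (r : Fin N → ℝ) (α : ℝ)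
    (a : A) (s : S) (t : T) (a' : A) : ℝ :=
  ∑ i : Fin N, (r i + α * (1 - r i)) * ((ξ i).count (a, s, t, a') : ℝ)

/-- The normalized routing matrix row `M^α[a,s,t,a']`. -/
noncomputable def routingMatrix {A S T : Type*} [Fintype A]
    [DecidableEq A] [DecidableEq S] [DecidableEq T]
    {N : ℕ} (ξ : Fin N → List (A × S × T × A)) (r : Fin N → ℝ) (α : ℝ)
    (a : A) (s : S) (t : T) (a' : A) : ℝ :=
  countTensor ξ r α a s t a' / ∑ a'' : A, countTensor ξ r α a s t a''

/-- Fix `(a,s,t)` and suppose the successful-trace row sum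
`Σ_{a''} C^1_succ[a,s,t,a'']` is positive, where `C^1_succ` counts only transitions from
traces with `r i = 1`.  If `a*` is a successor such that no unsuccessful trace (`r i = 0`)
contains the transition `(a,s,t,a*)`, then `α ↦ M^α[a,s,t,a*]` is non-increasing on `[0,1]`. -/
theorem routing_probability_antitone_in_alpha
    {A S T : Type*} [Fintype A] [Fintype S] [Fintype T]
    [DecidableEq A] [DecidableEq S] [DecidableEq T]
    {N : ℕ} (ξ : Fin N → List (A × S × T × A)) (r : Fin N → ℝ)
    (hr : ∀ i, r i = 0 ∨ r i = 1)
    (a : A) (s : S) (t : T)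
    (hsucc : 0 < ∑ a'' : A, ∑ i : Fin N, r i * ((ξ i).count (a, s, t, a'') : ℝ))
    (astar : A)
    (hnofail : ∀ i, r i = 0 → (a, s, t, astar) ∉ ξ i) :
    ∀ α₁ α₂ : ℝ, 0 ≤ α₁ → α₁ ≤ α₂ → α₂ ≤ 1 →
      routingMatrix ξ r α₂ a s t astar ≤ routingMatrix ξ r α₁ a s t astar := by
  intro α₁ α₂ h0 h12 _
  have hw : ∀ i, 0 ≤ r i ∧ 0 ≤ 1 - r i := by
    intro i
    rcases hr i with h | h <;> rw [h] <;> norm_num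
  have hnum : countTensor ξ r α₂ a s t astar = countTensor ξ r α₁ a s t astar := by
    unfold countTensor
    refine Finset.sum_congr rfl fun i _ => ?_
    rcases hr i with h | h
    · rw [List.count_eq_zero_of_not_mem (hnofail i h)]
      simp
    · rw [h]
      ring
  have hnn : 0 ≤ countTensor ξ r α₁ a s t astar := by
    unfold countTensor
    refine Finset.sum_nonneg fun i _ => mul_nonneg ?_ (Nat.cast_nonneg _)
    exact add_nonneg (hw i).1 (mul_nonneg h0 (hw i).2)
  have hpos : 0 < ∑ a'' : A, countTensor ξ r α₁ a s t a'' := by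
    refine lt_of_lt_of_le hsucc ?_
    unfold countTensor
    refine Finset.sum_le_sum fun a'' _ => Finset.sum_le_sum fun i _ => ?_
    refine mul_le_mul_of_nonneg_right ?_ (Nat.cast_nonneg _)
    linarith [mul_nonneg h0 (hw i).2]
  have hle : ∑ a'' : A, countTensor ξ r α₁ a s t a''
      ≤ ∑ a'' : A, countTensor ξ r α₂ a s t a'' := by
    unfold countTensor
    refine Finset.sum_le_sum fun a'' _ => Finset.sum_le_sum fun i _ => ?_
    refine mul_le_mul_of_nonneg_right ?_ (Nat.cast_nonneg _)
    linarith [mul_le_mul_of_nonneg_right h12 (hw i).2]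
  unfold routingMatrix
  rw [hnum]
  exact div_le_div_of_nonneg_left hnn hpos hle
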